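/- There are no perfect numbers x and y with x - y = 435; that is, 435 is not the distance between two perfect numbers. -/

import Mathlib

/-!
Pairing each divisor `d` of `n` with `n / d` shows that `σ n` is even when `n` is odd and not a
square, and that `4 ∣ σ n` when `n ≡ 3 (mod 4)`. An odd perfect number `n` has `σ n = 2 * n`, which
is not divisible by `4`; so `n ≢ 3 (mod 4)`, and of two coprime factors with product `n`, one is a
square.

Of two perfect numbers at distance `435`, exactly one is even, and by Euler it has the form
`2 ^ k * (2 ^ (k + 1) - 1)`. If it is the smaller one, the larger one is `6 + 435` or `3 (mod 4)`.
If it is the larger one, then `435 = 15 * (2 * 15 - 1)` makes the difference factor: the odd perfect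
number is `a * (2 * a + 59)` with `a = 2 ^ k - 15`. These factors are coprime up to powers of the
prime `59`, so one of them is a square up to a factor `59`, and congruences modulo `8` leave only
`a = t ^ 2`. The equation `2 ^ k = t ^ 2 + 15` forces `k = 4` or `k = 6`.
-/

section SumOfDivisors

open ArithmeticFunction
open scoped ArithmeticFunction.sigma

theorem dvd_sigma_one_of_forall_mul_eq {q n : ℕ} (hn : ¬ IsSquare n)
    (h : ∀ d e, d * e = n → q ∣ d + e) : q ∣ σ 1 n := by
  have hn0 : n ≠ 0 := by
    rintro rfl
    exact hn IsSquare.zero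
  have mul_div {d : ℕ} (hd : d ∈ n.divisors) : d * (n / d) = n :=
    Nat.mul_div_cancel' (Nat.dvd_of_mem_divisors hd)
  rw [sigma_one_apply, ← ZMod.natCast_eq_zero_iff, Nat.cast_sum]
  refine Finset.sum_involution (fun d _ ↦ n / d) (fun d hd ↦ ?_) (fun d hd _ hfix ↦ ?_)
    (fun d hd ↦ ?_) fun d hd ↦ Nat.div_div_self (Nat.dvd_of_mem_divisors hd) hn0
  · rw [← Nat.cast_add, ZMod.natCast_eq_zero_iff]
    exact h d (n / d) (mul_div hd)
  · have hsq := mul_div hd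
    rw [hfix] at hsq
    exact hn ⟨d, hsq.symm⟩
  · exact Nat.mem_divisors.2 ⟨Nat.div_dvd_of_dvd (Nat.dvd_of_mem_divisors hd), hn0⟩

theorem isSquare_of_odd_of_odd_sigma_one {n : ℕ} (hn : Odd n) (hσ : Odd (σ 1 n)) :
    IsSquare n := by
  by_contra hsq
  refine Nat.not_even_iff_odd.2 hσ (even_iff_two_dvd.2 (dvd_sigma_one_of_forall_mul_eq hsq ?_))
  rintro d e rfl
  obtain ⟨hd, he⟩ := Nat.odd_mul.1 hn
  exact even_iff_two_dvd.1 (hd.add_odd he)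

theorem mod_eight_of_isSquare {n : ℕ} (hn : IsSquare n) : n % 8 = 0 ∨ n % 8 = 1 ∨ n % 8 = 4 := by
  obtain ⟨t, rfl⟩ := hn
  have : t % 8 < 8 := Nat.mod_lt _ (by norm_num)
  rw [Nat.mul_mod]
  interval_cases t % 8 <;> simp

theorem four_dvd_sigma_one {n : ℕ} (hn : n % 4 = 3) : 4 ∣ σ 1 n := by
  refine dvd_sigma_one_of_forall_mul_eq (fun hsq ↦ ?_) ?_
  · have := mod_eight_of_isSquare hsq
    omega
  · rintro d e rfl
    have add_eq_zero : ∀ a b : ZMod 4, a * b = 3 → a + b = 0 := by decide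
    rw [← ZMod.natCast_eq_zero_iff, Nat.cast_add]
    apply add_eq_zero
    rw [← Nat.cast_mul, ← ZMod.natCast_mod, hn, Nat.cast_ofNat]

theorem isSquare_or_isSquare_of_coprime {m n : ℕ} (hmn : m.Coprime n) (hodd : Odd (m * n))
    (hσ : ¬ 4 ∣ σ 1 (m * n)) : IsSquare m ∨ IsSquare n := by
  obtain ⟨hm, hn⟩ := Nat.odd_mul.1 hodd
  rw [isMultiplicative_sigma.map_mul_of_coprime hmn] at hσ
  by_contra! hsq
  have even_sigma {l : ℕ} (hl : Odd l) (hl' : ¬ IsSquare l) : 2 ∣ σ 1 l :=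
    even_iff_two_dvd.1 <| Nat.not_odd_iff_even.1 <| mt (isSquare_of_odd_of_odd_sigma_one hl) hl'
  exact hσ (mul_dvd_mul (even_sigma hm hsq.1) (even_sigma hn hsq.2))

theorem isSquare_pow_mul_or_isSquare_mul_pow_mul {m : ℕ} (hm : IsSquare m) (p i : ℕ) :
    IsSquare (p ^ i * m) ∨ IsSquare (p * (p ^ i * m)) := by
  rcases i.even_or_odd with hi | hi
  · exact .inl ((hi.isSquare_pow p).mul hm)
  · rw [← mul_assoc, ← pow_succ']
    exact .inr ((hi.add_one.isSquare_pow p).mul hm)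

theorem isSquare_or_isSquare_mul_of_gcd_dvd_prime {p a b : ℕ} (hp : p.Prime)
    (hgcd : a.gcd b ∣ p) (hodd : Odd (a * b)) (hσ : ¬ 4 ∣ σ 1 (a * b)) :
    (IsSquare a ∨ IsSquare (p * a)) ∨ IsSquare b ∨ IsSquare (p * b) := by
  obtain ⟨ha, hb⟩ := Nat.odd_mul.1 hodd
  obtain ⟨i, a', ha', rfl⟩ := Nat.exists_eq_pow_mul_and_not_dvd ha.pos.ne' p hp.ne_one
  obtain ⟨j, b', hb', rfl⟩ := Nat.exists_eq_pow_mul_and_not_dvd hb.pos.ne' p hp.ne_one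
  have hpa : p.Coprime a' := hp.coprime_iff_not_dvd.2 ha'
  have hpb : p.Coprime b' := hp.coprime_iff_not_dvd.2 hb'
  have hab : a'.Coprime b' := by
    have hdvd : a'.gcd b' ∣ p :=
      (Nat.gcd_dvd_gcd_of_dvd_left _ (Dvd.intro_left _ rfl)).trans <|
        (Nat.gcd_dvd_gcd_of_dvd_right _ (Dvd.intro_left _ rfl)).trans hgcd
    exact Nat.eq_one_of_dvd_coprimes hpa hdvd (Nat.gcd_dvd_left a' b')
  have hsplit : p ^ i * a' * (p ^ j * b') = p ^ (i + j) * (a' * b') := by ring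
  have hσ' : ¬ 4 ∣ σ 1 (a' * b') := by
    rw [hsplit, isMultiplicative_sigma.map_mul_of_coprime ((hpa.mul_right hpb).pow_left _)] at hσ
    exact fun h ↦ hσ (h.mul_left _)
  have hodd' : Odd (a' * b') := (Nat.odd_mul.1 (hsplit ▸ hodd)).2
  exact (isSquare_or_isSquare_of_coprime hab hodd' hσ').imp
    (isSquare_pow_mul_or_isSquare_mul_pow_mul · p i)
    (isSquare_pow_mul_or_isSquare_mul_pow_mul · p j)

theorem sigma_one_two_pow (k : ℕ) : σ 1 (2 ^ k) = mersenne (k + 1) := by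
  rw [sigma_one_apply_prime_pow Nat.prime_two, mersenne, Nat.geomSum_eq le_rfl, Nat.div_one]

theorem eq_of_mul_sigma_one_eq {m q : ℕ} (hm : m ≠ 0) (hq : 1 < q)
    (h : q * σ 1 m = (q + 1) * m) : m = q := by
  have hdvd : q ∣ m :=
    (Nat.coprime_self_add_right.2 (Nat.coprime_one_right q)).dvd_of_dvd_mul_left ⟨_, h.symm⟩
  obtain ⟨c, rfl⟩ := hdvd
  have hσ : σ 1 (q * c) = c + q * c := by
    apply Nat.eq_of_mul_eq_mul_left (zero_lt_one.trans hq)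
    rw [h]
    ring
  have hproper : ∑ d ∈ (q * c).properDivisors, d = c := by
    rw [sigma_one_apply, Nat.sum_divisors_eq_sum_properDivisors_add_self] at hσ
    exact Nat.add_right_cancel hσ
  have hproper_dvd : ∑ d ∈ (q * c).properDivisors, d ∣ q * c := by
    rw [hproper]
    exact Dvd.intro_left q rfl
  rcases Nat.sum_properDivisors_dvd hproper_dvd with h1 | hself
  · rw [← hproper, h1, mul_one]
  · have hc : 0 < c := Nat.pos_of_ne_zero (right_ne_zero_of_mul hm)
    nlinarith

end SumOfDivisors

section Perfect

open ArithmeticFunction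
open scoped ArithmeticFunction.sigma

variable {n : ℕ}

theorem sigma_one_of_perfect (hn : n.Perfect) : σ 1 n = 2 * n := by
  rw [sigma_one_apply, (Nat.perfect_iff_sum_divisors_eq_two_mul hn.2).1 hn]

theorem not_four_dvd_sigma_one_of_perfect_of_odd (hn : n.Perfect) (hodd : Odd n) :
    ¬ 4 ∣ σ 1 n := by
  rw [sigma_one_of_perfect hn]
  obtain ⟨m, rfl⟩ := hodd
  omega

theorem mod_four_ne_three_of_perfect (hn : n.Perfect) : n % 4 ≠ 3 := fun h ↦
  not_four_dvd_sigma_one_of_perfect_of_odd hn (Nat.odd_iff.2 (by omega)) (four_dvd_sigma_one h)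

theorem exists_eq_two_pow_mul_mersenne_of_perfect_of_even (hn : n.Perfect) (heven : Even n) :
    ∃ k ≠ 0, n = 2 ^ k * mersenne (k + 1) := by
  obtain ⟨k, m, hm, rfl⟩ := Nat.exists_eq_two_pow_mul_odd hn.2.ne'
  have hk : k ≠ 0 := by
    rintro rfl
    rw [pow_zero, one_mul] at heven
    exact Nat.not_even_iff_odd.2 hm heven
  have hσ : mersenne (k + 1) * σ 1 m = (mersenne (k + 1) + 1) * m := by
    have hcop : (2 ^ k).Coprime m := (Nat.coprime_two_left.2 hm).pow_left k
    rw [← sigma_one_two_pow, ← isMultiplicative_sigma.map_mul_of_coprime hcop,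
      sigma_one_of_perfect hn, sigma_one_two_pow, succ_mersenne]
    ring
  exact ⟨k, hk, by rw [← eq_of_mul_sigma_one_eq hm.pos.ne' (one_lt_mersenne.2 (by omega)) hσ]⟩

theorem eq_six_or_four_dvd_of_perfect_of_even (hn : n.Perfect) (heven : Even n) :
    n = 6 ∨ 4 ∣ n := by
  obtain ⟨k, hk, rfl⟩ := exists_eq_two_pow_mul_mersenne_of_perfect_of_even hn heven
  obtain rfl | hk2 : k = 1 ∨ 2 ≤ k := by omega
  · exact .inl rfl
  · exact .inr ((pow_dvd_pow 2 hk2).mul_right _)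

theorem isSquare_of_perfect_mul_two_mul_add_prime {p a : ℕ} (hp : p.Prime) (hp8 : p % 8 = 3)
    (ha : a % 4 = 1) (h : (a * (2 * a + p)).Perfect) : IsSquare a := by
  have hgcd : a.gcd (2 * a + p) ∣ p :=
    (Nat.dvd_add_right ((Nat.gcd_dvd_left _ _).mul_left 2)).1 (Nat.gcd_dvd_right _ _)
  have hodd : Odd (a * (2 * a + p)) :=
    Nat.odd_mul.2 ⟨Nat.odd_iff.2 (by omega), Nat.odd_iff.2 (by omega)⟩
  have hσ := not_four_dvd_sigma_one_of_perfect_of_odd h hodd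
  have hpa : p * a % 4 = 3 := by
    rw [Nat.mul_mod, ha, show p % 4 = 3 by omega]
  have hpb : p * (2 * a + p) % 8 = 7 := by
    rw [Nat.mul_mod, hp8, show (2 * a + p) % 8 = 5 by omega]
  rcases isSquare_or_isSquare_mul_of_gcd_dvd_prime hp hgcd hodd hσ with (hsq | hsq) | hsq | hsq
  · exact hsq
  all_goals
    have := mod_eight_of_isSquare hsq
    omega

theorem exists_two_pow_eq_sq_add_of_perfect {c k : ℕ} (hc : c % 4 = 3) (hp : (4 * c - 1).Prime)
    (hn : n.Perfect) (h : n + c * (2 * c - 1) = 2 ^ k * mersenne (k + 1)) :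
    ∃ t, 2 ^ k = t ^ 2 + c ∧ n = t ^ 2 * (2 * t ^ 2 + (4 * c - 1)) := by
  rw [mersenne, pow_succ'] at h
  have hck : c < 2 ^ k := by
    by_contra! hle
    have : 2 ^ k * (2 * 2 ^ k - 1) ≤ c * (2 * c - 1) := by gcongr
    have := hn.2
    omega
  have hk : 2 ≤ k := (Nat.pow_lt_pow_iff_right one_lt_two).1 (by omega : 2 ^ 1 < 2 ^ k)
  have h4 : 4 ∣ 2 ^ k := pow_dvd_pow 2 hk
  obtain ⟨a, ha⟩ := Nat.exists_eq_add_of_le' hck.le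
  have hfactor : n = a * (2 * a + (4 * c - 1)) := by
    rw [ha] at h
    zify [show 1 ≤ 2 * c by omega, show 1 ≤ 4 * c by omega, show 1 ≤ 2 * (a + c) by omega] at h ⊢
    linear_combination h
  obtain ⟨t, rfl⟩ := isSquare_of_perfect_mul_two_mul_add_prime hp (by omega) (by omega)
    (hfactor ▸ hn)
  exact ⟨t, by rw [ha, sq], by rw [hfactor, sq]⟩

end Perfect

theorem two_pow_mod_three_of_odd {k : ℕ} (hk : Odd k) : 2 ^ k % 3 = 2 := by
  obtain ⟨j, rfl⟩ := hk
  rw [pow_succ, pow_mul, Nat.mul_mod, Nat.pow_mod]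
  simp

theorem eq_four_or_eq_six_of_two_pow_eq_sq_add_fifteen {k t : ℕ} (h : 2 ^ k = t ^ 2 + 15) :
    k = 4 ∨ k = 6 := by
  have heven : Even k := by
    by_contra hk
    have hmod := two_pow_mod_three_of_odd (Nat.not_even_iff_odd.1 hk)
    have : t % 3 < 3 := Nat.mod_lt _ (by norm_num)
    rw [h, Nat.add_mod, Nat.pow_mod] at hmod
    interval_cases t % 3 <;> simp at hmod
  obtain ⟨j, rfl⟩ := heven
  have hsq : (2 ^ j) ^ 2 = t ^ 2 + 15 := by rw [← h, ← pow_mul, mul_two]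
  have hlt : t < 2 ^ j := lt_of_pow_lt_pow_left₀ 2 (Nat.zero_le _) (by linarith)
  have hle : 2 ^ j ≤ 2 ^ 3 := by nlinarith
  have hj : j ≤ 3 := (Nat.pow_le_pow_iff_right one_lt_two).1 hle
  interval_cases j <;> omega

theorem stmt_18 :
    ¬ ∃ x y : ℕ, Nat.Perfect x ∧ Nat.Perfect y ∧ x - y = 435 := by
  rintro ⟨x, y, hx, hy, hxy⟩
  obtain rfl : x = y + 435 := by omega
  rcases y.even_or_odd with heven | hodd
  · rcases eq_six_or_four_dvd_of_perfect_of_even hy heven with rfl | h4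
    · exact absurd hx.1 (by decide +kernel)
    · exact mod_four_ne_three_of_perfect hx (by omega)
  · have hx2 : Even (y + 435) := hodd.add_odd (by decide)
    obtain ⟨k, -, hk⟩ := exists_eq_two_pow_mul_mersenne_of_perfect_of_even hx hx2
    obtain ⟨t, ht, rfl⟩ :=
      exists_two_pow_eq_sq_add_of_perfect (c := 15) (by norm_num) (by norm_num) hy hk
    rcases eq_four_or_eq_six_of_two_pow_eq_sq_add_fifteen ht with rfl | rfl
    · have ht1 : t ^ 2 = 1 := by omega
      rw [ht1] at hy
      exact absurd hy.1 (by decide +kernel)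
    · have ht49 : t ^ 2 = 49 := by omega
      rw [ht49] at hy
      exact absurd hy.1 (by decide +kernel)
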